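/- (Hardness reduction for the finite counter problem) There is a total computable map taking each nondeterministic n-counter machine M to a counter machine M′ with a fresh counter v₀ such that: M has a non-halting computation (a computation that never reaches the 'halt' instruction) if and only if there exists β ∈ ℕ with counter v₀ ≤ β at every point of every computation of M′. Consequently the non-halting problem for n-counter machines many-one reduces to the finite counter problem. -/

import Mathlib

/-!
A machine `M` has no non-halting computation iff its computation tree, in which stuck
configurations are repeated forever, is finite: the tree branches at most twofold, so König's
lemma applies (`Cfg.exists_alive`, `hasNonHaltingComp_iff`). Whether level `N` of the tree is
empty is a primitive recursive question about the code of `M` and `N`, because each level is a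
finite list obtained from the previous one. Hence there is a primitive recursive `searchTest`
such that `searchTest n N` is nonzero for all `N` if `n` is the code of a well-formed machine
with a non-halting computation, and zero for all large `N` otherwise (`searchTest_spec`).

Counter machines compute all primitive recursive functions (`Impl.of_primrec'`), via a while
language whose programs compile to counter machines (`Exec.steps`). For an input `n`, the
reducing machine loads `n` into a counter, and then, for `N = 0, 1, 2, …` in turn, computes
`searchTest n N` and increments `v₀` if the result is `0` (`exists_machines`). If the test
eventually vanishes, `v₀` is unbounded. If it never vanishes, `v₀ = 0` at the beginning of every
round; since the machine is deterministic, every reachable configuration is followed by the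
beginning of a round, and since `v₀` is never decremented, `v₀ = 0` throughout. Only the
existence of runs of compiled programs is needed, not a converse.

The same map serves both parts of the theorem: `searchTest` also rejects numbers that are not
codes of well-formed machines, and their images have unbounded `v₀`.
-/

/-- `A ⊆ ℕ` is Σ⁰₁ (recursively enumerable): `A` is the domain of a partial
computable function. -/
def Sigma01 (A : Set ℕ) : Prop :=
  ∃ f : ℕ →. ℕ, Nat.Partrec f ∧ ∀ n, n ∈ A ↔ (f n).Dom

/-- `A ⊆ ℕ` is Π⁰₁: its complement is Σ⁰₁. -/
def Pi01 (A : Set ℕ) : Prop := Sigma01 Aᶜ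

/-- `A ⊆ ℕ` is Σ⁰₂: `n ∈ A ↔ ∃ a, ∀ b, R n a b` for a decidable relation `R`. -/
def Sigma02 (A : Set ℕ) : Prop :=
  ∃ R : ℕ → ℕ → ℕ → Bool, Computable (fun p : ℕ × ℕ × ℕ => R p.1 p.2.1 p.2.2) ∧
    ∀ n, n ∈ A ↔ ∃ a, ∀ b, R n a b = true

/-- `A` many-one reduces to `B`: there is a total computable `f` with
`n ∈ A ↔ f n ∈ B` for all `n`. -/
def ManyOneRed (A B : Set ℕ) : Prop :=
  ∃ f : ℕ → ℕ, Computable f ∧ ∀ n, n ∈ A ↔ f n ∈ B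
/-- Instructions of nondeterministic counter machines. -/
inductive Instr where
  | halt : Instr
  | inc : ℕ → Instr
  | dec : ℕ → Instr
  | branch : ℕ → ℕ → ℕ → Instr
deriving DecidableEq

/-- A nondeterministic counter machine: a number of counters together with a
finite list of instructions `ℓ₀, …, ℓ_m`. -/
structure CM where
  numCounters : ℕ
  prog : List Instr

/-- Counters mentioned by an instruction. -/
def Instr.counters : Instr → List ℕ
  | .halt => []
  | .inc k => [k]
  | .dec k => [k]
  | .branch k _ _ => [k]

/-- Well-formedness: instructions only mention the machine's counters, and the
instruction `halt` occurs exactly once in the program. -/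
def CM.WellFormed (M : CM) : Prop :=
  (∀ i ∈ M.prog, ∀ k ∈ i.counters, k < M.numCounters) ∧
    M.prog.count Instr.halt = 1

/-- A configuration: current location and counter contents. -/
structure Config where
  loc : ℕ
  cnt : ℕ → ℕ

/-- The initial configuration: location `ℓ₀`, all counters equal to `0`. -/
def initConfig : Config := ⟨0, fun _ => 0⟩

/-- One nondeterministic computation step. `halt` has no successor, and
decrementing a zero counter is undefined (no successor). -/
def Step (M : CM) (c c' : Config) : Prop :=
  match M.prog[c.loc]? with
  | none => False
  | some .halt => False
  | some (.inc k) => c' = ⟨c.loc + 1, Function.update c.cnt k (c.cnt k + 1)⟩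
  | some (.dec k) => 0 < c.cnt k ∧ c' = ⟨c.loc + 1, Function.update c.cnt k (c.cnt k - 1)⟩
  | some (.branch k i j) =>
      (c.cnt k ≠ 0 ∧ (c' = ⟨i, c.cnt⟩ ∨ c' = ⟨j, c.cnt⟩)) ∨
        (c.cnt k = 0 ∧ c' = ⟨c.loc + 1, c.cnt⟩)

/-- `c` occurs at some point of some computation of `M`. -/
def Reaches (M : CM) (c : Config) : Prop :=
  Relation.ReflTransGen (Step M) initConfig c

/-- Counter `v₀` exceeds `β` at some point of some computation of `M`. -/
def Overflows (M : CM) (β : ℕ) : Prop := ∃ c, Reaches M c ∧ β < c.cnt 0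

/-- Some computation of `M` reaches the `halt` instruction. -/
def Halts (M : CM) : Prop := ∃ c, Reaches M c ∧ M.prog[c.loc]? = some Instr.halt

/-- An infinite computation of `M`. -/
def IsInfRun (M : CM) (ρ : ℕ → Config) : Prop :=
  ρ 0 = initConfig ∧ ∀ k, Step M (ρ k) (ρ (k + 1))

/-- A (finite or infinite) computation of `M`, presented as an infinite
sequence that stutters forever once no step is possible. -/
def IsComp (M : CM) (ρ : ℕ → Config) : Prop :=
  ρ 0 = initConfig ∧
    ∀ k, Step M (ρ k) (ρ (k + 1)) ∨ ((¬ ∃ c, Step M (ρ k) c) ∧ ρ (k + 1) = ρ k)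

/-- Effective code of an instruction. -/
def Instr.code : Instr → ℕ
  | .halt => Nat.pair 0 0
  | .inc k => Nat.pair 1 k
  | .dec k => Nat.pair 2 k
  | .branch k i j => Nat.pair 3 (Nat.pair k (Nat.pair i j))

/-- Effective code of a list of naturals. -/
def listCode : List ℕ → ℕ
  | [] => 0
  | a :: l => Nat.pair a (listCode l) + 1

/-- A fixed effective encoding of counter machines as natural numbers. -/
def CM.code (M : CM) : ℕ :=
  Nat.pair M.numCounters (listCode (M.prog.map Instr.code))

/-- `M` has a computation that never reaches the `halt` instruction. -/
def HasNonHaltingComp (M : CM) : Prop :=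
  ∃ ρ : ℕ → Config, IsComp M ρ ∧ ∀ k, M.prog[(ρ k).loc]? ≠ some Instr.halt

/-! ### A while language and its compilation to counter machines -/

/-- While programs over registers indexed by `ℕ`. -/
inductive Com where
  | inc : ℕ → Com
  | dec : ℕ → Com
  | seq : Com → Com → Com
  | loop : ℕ → Com → Com

/-- Big-step semantics; `loop k c` runs `c` as long as register `k` is nonzero.
Decrementing a zero register has no execution. -/
inductive Exec : Com → (ℕ → ℕ) → (ℕ → ℕ) → Prop
  | inc (k σ) : Exec (.inc k) σ (Function.update σ k (σ k + 1))
  | dec (k σ) : 0 < σ k → Exec (.dec k) σ (Function.update σ k (σ k - 1))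
  | seq {c d σ τ ρ} : Exec c σ τ → Exec d τ ρ → Exec (.seq c d) σ ρ
  | loop_done {k c σ} : σ k = 0 → Exec (.loop k c) σ σ
  | loop_step {k c σ τ ρ} : σ k ≠ 0 → Exec c σ τ → Exec (.loop k c) τ ρ →
      Exec (.loop k c) σ ρ

/-- Number of instructions of the compiled program. -/
def Com.len : Com → ℕ
  | .inc _ => 1
  | .dec _ => 1
  | .seq c d => c.len + d.len
  | .loop _ c => c.len + 3

/-- Machine code for a while program placed at address `s`. Register `k` lives in counter
`k + 2`; counter `0` is untouched, and counter `1` is assumed to be nonzero, so that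
`branch 1 i i` is an unconditional jump to `i`. -/
def Com.compile : Com → ℕ → List Instr
  | .inc k, _ => [.inc (k + 2)]
  | .dec k, _ => [.dec (k + 2)]
  | .seq c d, s => c.compile s ++ d.compile (s + c.len)
  | .loop k c, s =>
      .branch (k + 2) (s + 2) (s + 2) :: .branch 1 (s + c.len + 3) (s + c.len + 3) ::
        (c.compile (s + 2) ++ [.branch (k + 2) (s + 2) (s + 2)])

theorem Com.length_compile (c : Com) (s : ℕ) : (c.compile s).length = c.len := by
  induction c generalizing s <;> simp [Com.compile, Com.len, *]

/-- The code `l` occurs in the program `P` at address `s`. -/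
def CodeAt (P : List Instr) : ℕ → List Instr → Prop
  | _, [] => True
  | s, x :: l => P[s]? = some x ∧ CodeAt P (s + 1) l

theorem codeAt_append (P l₁ l₂ : List Instr) (s : ℕ) :
    CodeAt P s (l₁ ++ l₂) ↔ CodeAt P s l₁ ∧ CodeAt P (s + l₁.length) l₂ := by
  induction l₁ generalizing s with
  | nil => simp [CodeAt]
  | cons x l ih =>
    simp only [List.cons_append, CodeAt, ih, List.length_cons, and_assoc]
    rw [show s + 1 + l.length = s + (l.length + 1) by omega]

theorem codeAt_self (pre l : List Instr) : CodeAt (pre ++ l) pre.length l := by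
  induction l generalizing pre with
  | nil => trivial
  | cons x l ih =>
    refine ⟨by simp, ?_⟩
    simpa using ih (pre ++ [x])

/-- Counter contents of the compiled machine: `v₀ = a`, the jump flag `v₁ = 1`, and the
registers `σ` from counter `2` on. -/
def embed (a : ℕ) (σ : ℕ → ℕ) : ℕ → ℕ
  | 0 => a
  | 1 => 1
  | k + 2 => σ k

theorem embed_update (a : ℕ) (σ : ℕ → ℕ) (k v : ℕ) :
    embed a (Function.update σ k v) = Function.update (embed a σ) (k + 2) v := by
  funext j
  match j with
  | 0 => simp [embed]
  | 1 => simp [embed]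
  | j + 2 => by_cases h : j = k <;> simp [embed, h]

theorem step_inc {M : CM} {s k : ℕ} (h : M.prog[s]? = some (.inc k)) (v : ℕ → ℕ) :
    Step M ⟨s, v⟩ ⟨s + 1, Function.update v k (v k + 1)⟩ := by
  simp [Step, h]

theorem step_dec {M : CM} {s k : ℕ} (h : M.prog[s]? = some (.dec k)) (v : ℕ → ℕ)
    (hv : 0 < v k) : Step M ⟨s, v⟩ ⟨s + 1, Function.update v k (v k - 1)⟩ := by
  simp [Step, h, hv]

theorem step_jump {M : CM} {s k i : ℕ} (h : M.prog[s]? = some (.branch k i i)) (v : ℕ → ℕ)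
    (hv : v k ≠ 0) : Step M ⟨s, v⟩ ⟨i, v⟩ := by
  simp [Step, h, hv]

theorem step_pass {M : CM} {s k i : ℕ} (h : M.prog[s]? = some (.branch k i i)) (v : ℕ → ℕ)
    (hv : v k = 0) : Step M ⟨s, v⟩ ⟨s + 1, v⟩ := by
  simp [Step, h, hv]

/-- Every execution of a while program is carried out by its compiled code. The second
component, about loops, describes a run from the test at the end of the loop body, which is
where the compiled loop arrives after each round. -/
theorem Exec.steps {c : Com} {σ τ : ℕ → ℕ} (h : Exec c σ τ) (M : CM) (a : ℕ) :
    ∀ s, CodeAt M.prog s (c.compile s) →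
      Relation.ReflTransGen (Step M) ⟨s, embed a σ⟩ ⟨s + c.len, embed a τ⟩ ∧
      ∀ k d, c = .loop k d →
        Relation.ReflTransGen (Step M) ⟨s + 2 + d.len, embed a σ⟩ ⟨s + c.len, embed a τ⟩ := by
  induction h with
  | inc k σ =>
    intro s hs
    refine ⟨.single ?_, by simp⟩
    rw [embed_update]
    exact step_inc hs.1 (embed a σ)
  | dec k σ hk =>
    intro s hs
    refine ⟨.single ?_, by simp⟩
    rw [embed_update]
    exact step_dec hs.1 (embed a σ) hk
  | @seq c d σ τ ρ _ _ ih₁ ih₂ =>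
    intro s hs
    rw [Com.compile, codeAt_append, Com.length_compile] at hs
    refine ⟨((ih₁ s hs.1).1).trans ?_, by simp⟩
    have := (ih₂ _ hs.2).1
    rwa [add_assoc] at this
  | @loop_done k c σ hk =>
    intro s hs
    simp only [Com.compile, CodeAt, codeAt_append, Com.length_compile, and_true] at hs
    obtain ⟨h₁, h₂, _, h₃⟩ := hs
    refine ⟨?_, ?_⟩
    · refine .head (step_pass h₁ _ hk) (.single ?_)
      have := step_jump h₂ (embed a σ) (by simp [embed])
      rwa [add_assoc s] at this
    · rintro _ _ ⟨⟩
      refine .single ?_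
      have := step_pass (M := M) (s := s + 2 + c.len) h₃ (embed a σ) hk
      rwa [show s + 2 + c.len + 1 = s + (Com.loop k c).len by simp [Com.len]; omega] at this
  | @loop_step k c σ τ ρ hk _ _ ih₁ ih₂ =>
    intro s hs
    have hs' := hs
    simp only [Com.compile, CodeAt, codeAt_append, Com.length_compile, and_true] at hs
    obtain ⟨h₁, h₂, h₀, h₃⟩ := hs
    have key := ((ih₁ (s + 2) h₀).1).trans ((ih₂ s hs').2 k c rfl)
    refine ⟨.head (step_jump h₁ _ hk) key, ?_⟩
    rintro _ _ ⟨⟩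
    exact .head (step_jump (s := s + 2 + c.len) h₃ _ hk) key

/-! ### While programs compute the primitive recursive functions -/

/-- Resetting a register to zero. -/
def Com.clear (k : ℕ) : Com := .loop k (.dec k)

theorem exec_clear (k : ℕ) (σ : ℕ → ℕ) : Exec (.clear k) σ (Function.update σ k 0) := by
  obtain ⟨n, hn⟩ : ∃ n, σ k = n := ⟨_, rfl⟩
  induction n generalizing σ with
  | zero => rw [← hn, Function.update_eq_self]; exact .loop_done hn
  | succ n ih =>
    refine .loop_step (by omega) (.dec k σ (by omega)) ?_
    have := ih (Function.update σ k (σ k - 1)) (by simp [hn])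
    rwa [Function.update_idem] at this

/-- Copying register `i` to register `o`, with the help of a scratch register `t`. -/
def Com.copy (i o t : ℕ) : Com :=
  .seq (.clear o) <| .seq (.clear t) <|
    .seq (.loop i (.seq (.dec i) (.seq (.inc o) (.inc t)))) (.loop t (.seq (.dec t) (.inc i)))

theorem exec_copy {i o t : ℕ} (hio : i ≠ o) (hit : i ≠ t) (hot : o ≠ t) (σ : ℕ → ℕ) :
    ∃ τ, Exec (.copy i o t) σ τ ∧ τ o = σ i ∧ ∀ k, k ≠ o → k ≠ t → τ k = σ k := by
  have h₁ : ∀ n, ∀ σ : ℕ → ℕ, σ i = n → ∃ τ,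
      Exec (.loop i (.seq (.dec i) (.seq (.inc o) (.inc t)))) σ τ ∧ τ i = 0 ∧
      τ o = σ o + n ∧ τ t = σ t + n ∧ ∀ k, k ≠ i → k ≠ o → k ≠ t → τ k = σ k := by
    intro n
    induction n with
    | zero => exact fun σ h => ⟨σ, .loop_done h, by simp [h]⟩
    | succ n ih =>
      intro σ h
      obtain ⟨ρ, e, e₁, e₂, e₃, e₄⟩ : ∃ ρ, Exec (.seq (.dec i) (.seq (.inc o) (.inc t))) σ ρ ∧
          ρ i = n ∧ ρ o = σ o + 1 ∧ ρ t = σ t + 1 ∧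
          ∀ k, k ≠ i → k ≠ o → k ≠ t → ρ k = σ k := by
        refine ⟨_, .seq (.dec i σ (by omega)) (.seq (.inc o _) (.inc t _)), ?_, ?_, ?_, ?_⟩
        · simp [hit, hio, h]
        · simp [hot, hio.symm]
        · simp [hot.symm, hit.symm]
        · intro k k₁ k₂ k₃
          simp [k₁, k₂, k₃]
      obtain ⟨τ, hτ, a₁, a₂, a₃, a₄⟩ := ih ρ e₁
      refine ⟨τ, .loop_step (by omega) e hτ, a₁, by omega, by omega, fun k k₁ k₂ k₃ => ?_⟩
      rw [a₄ k k₁ k₂ k₃, e₄ k k₁ k₂ k₃]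
  have h₂ : ∀ n, ∀ σ : ℕ → ℕ, σ t = n → ∃ τ,
      Exec (.loop t (.seq (.dec t) (.inc i))) σ τ ∧
      τ i = σ i + n ∧ ∀ k, k ≠ i → k ≠ t → τ k = σ k := by
    intro n
    induction n with
    | zero => exact fun σ h => ⟨σ, .loop_done h, by simp⟩
    | succ n ih =>
      intro σ h
      obtain ⟨ρ, e, e₁, e₂, e₃⟩ : ∃ ρ, Exec (.seq (.dec t) (.inc i)) σ ρ ∧
          ρ t = n ∧ ρ i = σ i + 1 ∧ ∀ k, k ≠ i → k ≠ t → ρ k = σ k := by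
        refine ⟨_, .seq (.dec t σ (by omega)) (.inc i _), ?_, ?_, ?_⟩
        · simp [hit.symm, h]
        · simp [hit]
        · intro k k₁ k₂
          simp [k₁, k₂]
      obtain ⟨τ, hτ, a₁, a₂⟩ := ih ρ e₁
      refine ⟨τ, .loop_step (by omega) e hτ, by omega, fun k k₁ k₂ => ?_⟩
      rw [a₂ k k₁ k₂, e₃ k k₁ k₂]
  obtain ⟨τ, hτ, a₁, a₂, a₃, a₄⟩ :=
    h₁ _ (Function.update (Function.update σ o 0) t 0) rfl
  obtain ⟨ρ, hρ, b₁, b₂⟩ := h₂ _ τ rfl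
  refine ⟨ρ, .seq (exec_clear o σ) (.seq (exec_clear t _) (.seq hτ hρ)), ?_, ?_⟩
  · rw [b₂ o hio.symm hot, a₂]; simp [hot, hio, hit]
  · intro k k₁ k₂
    by_cases hk : k = i
    · subst hk
      rw [b₁, a₁, a₃]; simp [k₁, k₂]
    · rw [b₂ k hk k₂, a₄ k hk k₁ k₂]; simp [k₁, k₂]

/-- `f` is computable by while programs: for all input registers below `b` there is a program
that puts the value of `f` into register `b` and preserves all registers below `b`.
The initial contents of registers from `b` on are arbitrary. -/
def Impl {n : ℕ} (f : List.Vector ℕ n → ℕ) : Prop :=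
  ∀ (inp : Fin n → ℕ) (b : ℕ), (∀ i, inp i < b) → ∃ c : Com, ∀ σ : ℕ → ℕ, ∃ τ,
    Exec c σ τ ∧ τ b = f (List.Vector.ofFn fun i => σ (inp i)) ∧ ∀ k < b, τ k = σ k

theorem Impl.comp {m n : ℕ} {f : List.Vector ℕ n → ℕ} (g : Fin n → List.Vector ℕ m → ℕ)
    (hf : Impl f) (hg : ∀ i, Impl (g i)) :
    Impl fun a => f (List.Vector.ofFn fun i => g i a) := by
  intro inp b hb
  -- The value of `g i` is stored in register `b + 1 + i`.
  have pre : ∀ j ≤ n, ∃ c : Com, ∀ σ : ℕ → ℕ, ∃ τ, Exec c σ τ ∧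
      (∀ i : Fin n, i.1 < j → τ (b + 1 + i) = g i (List.Vector.ofFn fun i => σ (inp i))) ∧
      ∀ k < b, τ k = σ k := by
    intro j
    induction j with
    | zero =>
      exact fun _ => ⟨.clear b, fun σ => ⟨_, exec_clear b σ, by simp, fun k hk => by
        simp [hk.ne]⟩⟩
    | succ j ih =>
      intro hj
      obtain ⟨c, hc⟩ := ih (by omega)
      obtain ⟨d, hd⟩ := hg ⟨j, hj⟩ inp (b + 1 + j) (fun i => by have := hb i; omega)
      refine ⟨.seq c d, fun σ => ?_⟩
      obtain ⟨τ, h₁, h₂, h₃⟩ := hc σ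
      obtain ⟨ρ, k₁, k₂, k₃⟩ := hd τ
      refine ⟨ρ, .seq h₁ k₁, ?_, fun k hk => by rw [k₃ k (by omega), h₃ k hk]⟩
      intro i hi
      rcases Nat.lt_succ_iff_lt_or_eq.1 hi with hi | hi
      · rw [k₃ _ (by omega), h₂ i hi]
      · obtain rfl : i = ⟨j, hj⟩ := Fin.ext hi
        rw [k₂]
        simp only [h₃ _ (hb _)]
  obtain ⟨c, hc⟩ := pre n le_rfl
  obtain ⟨d, hd⟩ := hf (fun i => b + 1 + i) (b + 1 + n) (fun i => by omega)
  refine ⟨.seq c (.seq d (.copy (b + 1 + n) b (b + n + 2))), fun σ => ?_⟩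
  obtain ⟨τ, h₁, h₂, h₃⟩ := hc σ
  obtain ⟨ρ, k₁, k₂, k₃⟩ := hd τ
  obtain ⟨π, l₁, l₂, l₃⟩ :=
    exec_copy (i := b + 1 + n) (o := b) (t := b + n + 2) (by omega) (by omega) (by omega) ρ
  refine ⟨π, .seq h₁ (.seq k₁ l₁), ?_, fun k hk => ?_⟩
  · rw [l₂, k₂]
    simp only [h₂ _ (Fin.is_lt _)]
  · rw [l₃ k (by omega) (by omega), k₃ k (by omega), h₃ k hk]

theorem Impl.prec {n : ℕ} {f : List.Vector ℕ n → ℕ} {g : List.Vector ℕ (n + 2) → ℕ}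
    (hf : Impl f) (hg : Impl g) :
    Impl fun v : List.Vector ℕ (n + 1) =>
      v.head.rec (f v.tail) fun y IH => g (y ::ᵥ IH ::ᵥ v.tail) := by
  intro inp b hb
  -- Register `b` holds the current value, `b + 1` the index of recursion and `b + 2` the
  -- number of rounds still to be done.
  obtain ⟨c, hc⟩ := hf (fun i => inp i.succ) b (fun i => hb _)
  obtain ⟨d, hd⟩ := hg (Fin.cons (b + 1) (Fin.cons b fun i => inp i.succ)) (b + 3) (by
    intro i
    refine Fin.cases ?_ (fun i => Fin.cases ?_ (fun i => ?_) i) i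
    · simp
    · simp
    · have := hb i.succ
      simp only [Fin.cons_succ]; omega)
  set body : Com := .seq d (.seq (.copy (b + 3) b (b + 4)) (.seq (.inc (b + 1)) (.dec (b + 2))))
    with hbody
  refine ⟨.seq c (.seq (.copy (inp 0) (b + 2) (b + 3))
    (.seq (.clear (b + 1)) (.loop (b + 2) body))), fun σ => ?_⟩
  set w : List.Vector ℕ n := List.Vector.ofFn fun i => σ (inp i.succ) with hw
  let R : ℕ → ℕ := fun x => x.rec (f w) fun y IH => g (y ::ᵥ IH ::ᵥ w)
  have main : ∀ m, ∀ τ : ℕ → ℕ, τ (b + 2) = m → τ b = R (τ (b + 1)) → (∀ k < b, τ k = σ k) →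
      ∃ ρ, Exec (.loop (b + 2) body) τ ρ ∧ ρ b = R (τ (b + 1) + m) ∧ ∀ k < b, ρ k = σ k := by
    intro m
    induction m with
    | zero => exact fun τ h₁ h₂ h₃ => ⟨τ, .loop_done h₁, h₂, h₃⟩
    | succ m ih =>
      intro τ h₁ h₂ h₃
      obtain ⟨τ₁, p₁, p₂, p₃⟩ := hd τ
      obtain ⟨τ₂, q₁, q₂, q₃⟩ :=
        exec_copy (i := b + 3) (o := b) (t := b + 4) (by omega) (by omega) (by omega) τ₁
      have q4 : τ₂ (b + 2) = m + 1 := by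
        rw [q₃ _ (by omega) (by omega), p₃ _ (by omega), h₁]
      have q5 : τ₂ (b + 1) = τ (b + 1) := by
        rw [q₃ _ (by omega) (by omega), p₃ _ (by omega)]
      obtain ⟨τ₃, hτ₃⟩ : ∃ τ₃, τ₃ = Function.update (Function.update τ₂ (b + 1) (τ₂ (b + 1) + 1))
        (b + 2) (Function.update τ₂ (b + 1) (τ₂ (b + 1) + 1) (b + 2) - 1) := ⟨_, rfl⟩
      have e : Exec body τ τ₃ := hτ₃ ▸ .seq p₁ (.seq q₁ (.seq (.inc (b + 1) τ₂)
        (.dec (b + 2) _ (by simp [q4]))))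
      have e₁ : τ₃ (b + 1) = τ (b + 1) + 1 := by simp [hτ₃, q5]
      have hval : τ₂ b = R (τ (b + 1) + 1) := by
        rw [q₂, p₂]
        show _ = g (τ (b + 1) ::ᵥ R (τ (b + 1)) ::ᵥ w)
        rw [List.Vector.ofFn, List.Vector.ofFn]
        simp only [Fin.cons_zero, Fin.cons_succ, h₂, hw, h₃ _ (hb _)]
      obtain ⟨ρ, r₁, r₂, r₃⟩ := ih τ₃ (by simp [hτ₃, q4]) (by
        rw [e₁, ← hval, hτ₃, Function.update_of_ne (by omega), Function.update_of_ne (by omega)])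
        (fun k hk => by
        rw [hτ₃, Function.update_of_ne (by omega), Function.update_of_ne (by omega),
          q₃ k (by omega) (by omega), p₃ k (by omega), h₃ k hk])
      refine ⟨ρ, .loop_step (by omega) e r₁, ?_, r₃⟩
      rw [r₂, e₁, add_assoc, add_comm 1]
  obtain ⟨τ₁, p₁, p₂, p₃⟩ := hc σ
  obtain ⟨τ₂, q₁, q₂, q₃⟩ := exec_copy (i := inp 0) (o := b + 2) (t := b + 3)
    (by have := hb 0; omega) (by have := hb 0; omega) (by omega) τ₁
  obtain ⟨ρ, r₁, r₂, r₃⟩ := main _ (Function.update τ₂ (b + 1) 0) rfl (by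
    simp only [Function.update_self]
    rw [Function.update_of_ne (by omega), q₃ _ (by omega) (by omega), p₂]
    rfl) (fun k hk => by
    rw [Function.update_of_ne (by omega), q₃ _ (by omega) (by omega), p₃ k hk])
  refine ⟨ρ, .seq p₁ (.seq q₁ (.seq (exec_clear _ _) r₁)), ?_, r₃⟩
  rw [r₂, Function.update_self, Function.update_of_ne (by omega), q₂, p₃ _ (hb 0), zero_add]
  simp [R, hw, List.Vector.ofFn]

theorem Impl.of_primrec' {n : ℕ} {f : List.Vector ℕ n → ℕ} (hf : Nat.Primrec' f) : Impl f := by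
  have hcopy : ∀ i b, i < b → ∀ σ : ℕ → ℕ, ∃ τ, Exec (.copy i b (b + 1)) σ τ ∧ τ b = σ i ∧
      ∀ k < b, τ k = σ k := fun i b hi σ => by
    obtain ⟨τ, h₁, h₂, h₃⟩ :=
      exec_copy (i := i) (o := b) (t := b + 1) (by omega) (by omega) (by omega) σ
    exact ⟨τ, h₁, h₂, fun k hk => h₃ k (by omega) (by omega)⟩
  induction hf with
  | zero =>
    exact fun inp b hb => ⟨.clear b, fun σ => ⟨_, exec_clear b σ, by simp, fun k hk => by
      simp [hk.ne]⟩⟩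
  | succ =>
    refine fun inp b hb => ⟨.seq (.copy (inp 0) b (b + 1)) (.inc b), fun σ => ?_⟩
    obtain ⟨τ, h₁, h₂, h₃⟩ := hcopy (inp 0) b (hb 0) σ
    refine ⟨_, .seq h₁ (.inc b τ), by simp [h₂, List.Vector.ofFn], fun k hk => ?_⟩
    rw [Function.update_of_ne hk.ne, h₃ k hk]
  | get i =>
    refine fun inp b hb => ⟨.copy (inp i) b (b + 1), fun σ => ?_⟩
    simpa using hcopy (inp i) b (hb i) σ
  | comp g _ _ ihf ihg => exact ihf.comp g ihg
  | prec _ _ ihf ihg => exact ihf.prec ihg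

/-! ### The reducing machines -/

theorem listCode_eq_encode (l : List ℕ) : listCode l = Encodable.encode l := by
  induction l with
  | nil => rfl
  | cons a l ih => rw [listCode, ih, Encodable.encode_list_cons]; rfl

/-- Instructions that keep the computation deterministic and never decrease `v₀`. -/
def Instr.Tame : Instr → Prop
  | .halt => True
  | .inc _ => True
  | .dec k => k ≠ 0
  | .branch _ i j => i = j

theorem step_deterministic {M : CM} (hM : ∀ x ∈ M.prog, x.Tame) {c d e : Config}
    (hd : Step M c d) (he : Step M c e) : d = e := by
  unfold Step at hd he
  rcases h : M.prog[c.loc]? with _ | x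
  · simp [h] at hd
  · have hx := hM x (List.mem_of_getElem? h)
    cases x with
    | halt => simp [h] at hd
    | inc k => simp only [h] at hd he; rw [hd, he]
    | dec k => simp only [h] at hd he; rw [hd.2, he.2]
    | branch k i j =>
      obtain rfl : i = j := hx
      simp only [h, or_self] at hd he
      rcases hd with hd | hd <;> rcases he with he | he
      · rw [hd.2, he.2]
      · exact absurd he.1 hd.1
      · exact absurd hd.1 he.1
      · rw [hd.2, he.2]

theorem step_mono {M : CM} (hM : ∀ x ∈ M.prog, x.Tame) {c d : Config}
    (hd : Step M c d) : c.cnt 0 ≤ d.cnt 0 := by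
  unfold Step at hd
  rcases h : M.prog[c.loc]? with _ | x
  · simp [h] at hd
  · have hx := hM x (List.mem_of_getElem? h)
    cases x with
    | halt => simp [h] at hd
    | inc k =>
      simp only [h] at hd
      subst hd
      by_cases hk : k = 0
      · subst hk; simp
      · simp [Function.update_of_ne (Ne.symm hk)]
    | dec k =>
      simp only [h] at hd
      rw [hd.2]
      simp [Function.update_of_ne (Ne.symm hx)]
    | branch k i j =>
      simp only [h] at hd
      rcases hd with ⟨_, hd | hd⟩ | ⟨_, hd⟩ <;> rw [hd]

theorem reaches_mono {M : CM} (hM : ∀ x ∈ M.prog, x.Tame) {c d : Config}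
    (hd : Relation.ReflTransGen (Step M) c d) : c.cnt 0 ≤ d.cnt 0 := by
  induction hd with
  | refl => exact le_rfl
  | tail _ h ih => exact ih.trans (step_mono hM h)

/-- In a deterministic machine, a recurring set `S` of configurations that is reached once is
reached again from every reachable configuration. -/
theorem reaches_recurrent {M : CM} (hM : ∀ x ∈ M.prog, x.Tame) {S : Config → Prop}
    (h₀ : ∃ c, Reaches M c ∧ S c)
    (hS : ∀ c, S c → ∃ d, Relation.TransGen (Step M) c d ∧ S d) {d : Config}
    (hd : Reaches M d) : ∃ e, Relation.ReflTransGen (Step M) d e ∧ S e := by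
  induction hd with
  | refl => exact h₀
  | tail _ h ih =>
    obtain ⟨e, he, hSe⟩ := ih
    rcases Relation.ReflTransGen.cases_head he with rfl | ⟨x, hx, hxe⟩
    · obtain ⟨f, hf, hSf⟩ := hS _ hSe
      obtain ⟨x, hx, hxf⟩ := Relation.TransGen.head'_iff.1 hf
      rw [step_deterministic hM h hx]
      exact ⟨f, hxf, hSf⟩
    · rw [step_deterministic hM h hx]
      exact ⟨e, hxe, hSe⟩

theorem Com.compile_tame (c : Com) (s : ℕ) : ∀ x ∈ c.compile s, x.Tame ∧ x ≠ .halt := by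
  induction c generalizing s with
  | inc k => simp [Com.compile, Instr.Tame]
  | dec k => simp [Com.compile, Instr.Tame]
  | seq c d ih₁ ih₂ =>
    intro x hx
    rcases List.mem_append.1 hx with hx | hx
    · exact ih₁ _ x hx
    · exact ih₂ _ x hx
  | loop k c ih =>
    intro x hx
    simp only [Com.compile, List.mem_cons, List.mem_append, List.not_mem_nil, or_false] at hx
    rcases hx with rfl | rfl | hx | rfl
    · simp [Instr.Tame]
    · simp [Instr.Tame]
    · exact ih _ x hx
    · simp [Instr.Tame]

theorem exists_counter_bound (l : List Instr) : ∃ K, ∀ x ∈ l, ∀ k ∈ x.counters, k < K := by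
  induction l with
  | nil => simp
  | cons x l ih =>
    obtain ⟨K, hK⟩ := ih
    refine ⟨K + x.counters.sum + 1, fun y hy k hk => ?_⟩
    rcases List.mem_cons.1 hy with rfl | hy
    · have := List.le_sum_of_mem hk
      omega
    · have := hK y hy k hk
      omega

/-- The part of the reducing machine that does not depend on its input: switch on the jump
flag, jump to the code that loads the input, and then forever run `c` and increment
`v₀` whenever register `2` (that is, counter `4`) is zero afterwards. -/
def driver (c : Com) : List Instr :=
  [.inc 1, .branch 1 (c.len + 5) (c.len + 5)] ++ (c.compile 2 ++
    [.branch 4 (c.len + 4) (c.len + 4), .inc 0, .branch 1 2 2])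

/-- Load `n` into register `0` and jump to the start of the infinite loop. The final `halt`
is unreachable. -/
def loader (n : ℕ) : List Instr := List.replicate n (.inc 2) ++ [.branch 1 2 2, .halt]

theorem driver_tame (c : Com) : ∀ x ∈ driver c, x.Tame ∧ x ≠ .halt := by
  intro x hx
  simp only [driver, List.mem_cons, List.mem_append, List.not_mem_nil, or_false] at hx
  rcases hx with (rfl | rfl) | hx | rfl | rfl | rfl
  all_goals first
    | exact c.compile_tame 2 x hx
    | simp [Instr.Tame]

theorem length_driver (c : Com) : (driver c).length = c.len + 5 := by
  simp [driver, Com.length_compile]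

theorem loader_run {M : CM} (a n : ℕ) (σ : ℕ → ℕ) (s : ℕ)
    (h : CodeAt M.prog s (loader n)) :
    Relation.ReflTransGen (Step M) ⟨s, embed a σ⟩
      ⟨2, embed a (Function.update σ 0 (σ 0 + n))⟩ := by
  induction n generalizing s σ with
  | zero =>
    simp only [loader, List.replicate_zero, List.nil_append, CodeAt] at h
    simpa using Relation.ReflTransGen.single (step_jump h.1 (embed a σ) (by simp [embed]))
  | succ n ih =>
    obtain ⟨h₁, h₂⟩ := h
    have := ih (Function.update σ 0 (σ 0 + 1)) (s + 1) h₂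
    rw [Function.update_idem, Function.update_self, add_assoc, add_comm 1] at this
    refine .head ?_ this
    rw [embed_update]
    exact step_inc h₁ (embed a σ)

/-- One round of the infinite loop. -/
theorem driver_round {M : CM} {c : Com} (hM : CodeAt M.prog 0 (driver c)) {σ τ : ℕ → ℕ}
    (h : Exec c σ τ) (a : ℕ) :
    Relation.TransGen (Step M) ⟨2, embed a σ⟩
      ⟨2, embed (if τ 2 = 0 then a + 1 else a) τ⟩ := by
  simp only [driver, codeAt_append, CodeAt, and_true, Com.length_compile, List.length_cons,
    List.length_nil, zero_add] at hM
  obtain ⟨_, h₁, h₂, h₃, h₄⟩ := hM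
  refine Relation.TransGen.trans_right (h.steps M a 2 h₁).1 ?_
  split_ifs with h0
  · refine .head (step_pass h₂ _ h0) (.head (step_inc h₃ _) ?_)
    have e : Function.update (embed a τ) 0 (embed a τ 0 + 1) = embed (a + 1) τ := by
      funext j
      match j with
      | 0 => simp [embed]
      | 1 => simp [embed]
      | j + 2 => simp [embed]
    rw [e]
    exact .single (step_jump h₄ _ (by simp [embed]))
  · refine .head (step_jump h₂ _ h0) (.single ?_)
    rw [show c.len + 4 = 2 + c.len + 1 + 1 by omega]
    exact step_jump h₄ _ (by simp [embed])

/-- For primitive recursive `p` there are machines, uniformly computable from `n`, that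
increment `v₀` once for every `N` with `p n N = 0`, and do not touch `v₀` otherwise. -/
theorem exists_machines (p : ℕ → ℕ → ℕ) (hp : Primrec₂ p) :
    ∃ G : ℕ → CM, Computable (fun n => (G n).code) ∧ ∀ n, (G n).WellFormed ∧
      ((∀ N, p n N ≠ 0) → ∀ c, Reaches (G n) c → c.cnt 0 ≤ 0) ∧
      ((∃ N₀, ∀ N ≥ N₀, p n N = 0) → ∀ β, ∃ c, Reaches (G n) c ∧ β < c.cnt 0) := by
  obtain ⟨c₀, hc₀⟩ := Impl.of_primrec' (Nat.Primrec'.prim_iff₂.2 hp) ![0, 1] 2 (by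
    intro i; fin_cases i <;> simp)
  -- Register `0` holds `n`, register `1` holds `N`, and register `2` receives `p n N`.
  obtain ⟨c, hc⟩ : ∃ c : Com, ∀ σ : ℕ → ℕ, ∃ τ, Exec c σ τ ∧ τ 2 = p (σ 0) (σ 1) ∧
      τ 0 = σ 0 ∧ τ 1 = σ 1 + 1 := by
    refine ⟨.seq c₀ (.inc 1), fun σ => ?_⟩
    obtain ⟨τ, h₁, h₂, h₃⟩ := hc₀ σ
    refine ⟨_, .seq h₁ (.inc 1 τ), ?_, ?_, ?_⟩
    · simp [h₂, List.Vector.ofFn]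
    · simp [h₃]
    · simp [h₃]
  obtain ⟨K, hK⟩ := exists_counter_bound (driver c)
  let G : ℕ → CM := fun n => ⟨K + 3, driver c ++ loader n⟩
  have htame : ∀ n, ∀ x ∈ (G n).prog, x.Tame := by
    intro n x hx
    rcases List.mem_append.1 hx with hx | hx
    · exact (driver_tame c x hx).1
    · simp only [loader, List.mem_append, List.mem_replicate, List.mem_cons, List.not_mem_nil,
        or_false] at hx
      rcases hx with ⟨_, rfl⟩ | rfl | rfl <;> simp [Instr.Tame]
  have hdriver : ∀ n, CodeAt (G n).prog 0 (driver c) := fun n =>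
    ((codeAt_append _ _ _ _).1 (codeAt_self [] (driver c ++ loader n))).1
  -- The loop is entered with `v₀ = 0` and `N = 0`.
  have hstart : ∀ n, Reaches (G n) ⟨2, embed 0 (Function.update (fun _ => 0) 0 n)⟩ := by
    intro n
    have h₁ := hdriver n
    simp only [driver, codeAt_append, CodeAt, and_true, List.length_cons,
      List.length_nil, zero_add] at h₁
    have h₂ := codeAt_self (driver c) (loader n)
    rw [length_driver] at h₂
    have h₃ := loader_run (M := G n) 0 n (fun _ => 0) (c.len + 5) h₂
    simp only [zero_add] at h₃
    refine .head (step_inc h₁.1.1 _) ?_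
    have e : Function.update (fun _ => 0 : ℕ → ℕ) 1 (0 + 1) = embed 0 (fun _ => 0) := by
      funext j
      match j with
      | 0 => simp [embed]
      | 1 => simp [embed]
      | j + 2 => simp [embed]
    show Relation.ReflTransGen (Step (G n)) ⟨0 + 1, Function.update (fun _ => 0) 1 (0 + 1)⟩ _
    rw [e]
    exact .head (step_jump h₁.1.2 _ (by simp [embed])) h₃
  refine ⟨G, ?_, fun n => ⟨⟨?_, ?_⟩, ?_, ?_⟩⟩
  · have h : Primrec fun n : ℕ => Nat.pair (K + 3) (Encodable.encode
        ((driver c).map Instr.code ++ ((List.range n).map (fun _ => (Instr.inc 2).code) ++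
          [(Instr.branch 1 2 2).code, Instr.halt.code]))) :=
      Primrec₂.natPair.comp (.const _) (Primrec.encode.comp (Primrec.list_append.comp (.const _)
        (Primrec.list_append.comp (Primrec.list_map Primrec.list_range (Primrec.const _).to₂)
          (.const _))))
    refine (h.of_eq fun n => ?_).to_comp
    simp [G, CM.code, listCode_eq_encode, loader, List.map_const']
  · intro x hx k hk
    show k < K + 3
    rcases List.mem_append.1 hx with hx | hx
    · have := hK x hx k hk
      omega
    · simp only [loader, List.mem_append, List.mem_replicate, List.mem_cons, List.not_mem_nil,
        or_false] at hx
      rcases hx with ⟨_, rfl⟩ | rfl | rfl <;> simp [Instr.counters] at hk <;> omega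
  · have : (driver c).count Instr.halt = 0 :=
      List.count_eq_zero.2 fun h => (driver_tame c _ h).2 rfl
    show (driver c ++ loader n).count Instr.halt = 1
    simp [loader, List.count_replicate, this]
  · intro hpos d hd
    obtain ⟨e, he, hSe⟩ := reaches_recurrent (htame n)
      (S := fun c => ∃ σ, σ 0 = n ∧ c = ⟨2, embed 0 σ⟩)
      ⟨_, hstart n, _, by simp, rfl⟩ (by
        rintro _ ⟨σ, hσ, rfl⟩
        obtain ⟨τ, h₁, h₂, h₃, _⟩ := hc σ
        have := driver_round (hdriver n) h₁ 0
        rw [if_neg (by rw [h₂, hσ]; exact hpos _)] at this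
        exact ⟨_, this, τ, h₃.trans hσ, rfl⟩) hd
    obtain ⟨σ, _, rfl⟩ := hSe
    exact reaches_mono (htame n) he
  · rintro ⟨N₀, hN₀⟩ β
    have hround : ∀ N, ∃ a σ, Reaches (G n) ⟨2, embed a σ⟩ ∧ σ 0 = n ∧ σ 1 = N ∧ N ≤ a + N₀ := by
      intro N
      induction N with
      | zero => exact ⟨0, _, hstart n, by simp, by simp, by simp⟩
      | succ N ih =>
        obtain ⟨a, σ, hr, h0, h1, ha⟩ := ih
        obtain ⟨τ, h₁, h₂, h₃, h₄⟩ := hc σ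
        refine ⟨_, τ, hr.trans (driver_round (hdriver n) h₁ a).to_reflTransGen,
          h₃.trans h0, by rw [h₄, h1], ?_⟩
        split_ifs with hz
        · omega
        · by_contra hlt
          exact hz (by rw [h₂, h0, h1]; exact hN₀ N (by omega))
    obtain ⟨a, σ, hr, _, _, ha⟩ := hround (N₀ + β + 1)
    exact ⟨_, hr, by show β < a; omega⟩

/-! ### Primitive recursive exploration of the computation tree -/

/-- A configuration as finite data: the location together with the list of all assignments
`(k, v)` made to counters so far, the most recent one first. -/
abbrev Cfg := ℕ × List (ℕ × ℕ)

/-- Current value of counter `k` after the assignments `h`. -/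
def Cfg.val (h : List (ℕ × ℕ)) (k : ℕ) : ℕ := (h.lookup k).getD 0

/-- The configuration described by finite data. -/
def Cfg.toConfig (x : Cfg) : Config := ⟨x.1, Cfg.val x.2⟩

theorem Cfg.val_cons (h : List (ℕ × ℕ)) (k v : ℕ) :
    Cfg.val ((k, v) :: h) = Function.update (Cfg.val h) k v := by
  funext j
  by_cases hj : j = k
  · subst hj; simp [Cfg.val]
  · have : (j == k) = false := by simpa using hj
    simp [Cfg.val, List.lookup_cons, this, hj]

/-- Successors of a configuration in the program with instruction codes `L`. A halted
configuration has none; a stuck one has itself as its only successor. An address outside the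
program reads as the instruction code `Nat.pair 4 0`, which encodes no instruction. -/
def Cfg.next (L : List ℕ) (x : Cfg) : List Cfg :=
  let t := (L.getD x.1 (Nat.pair 4 0)).unpair.1
  let k := (L.getD x.1 (Nat.pair 4 0)).unpair.2
  if t = 0 then []
  else if t = 1 then [(x.1 + 1, (k, Cfg.val x.2 k + 1) :: x.2)]
  else if t = 2 then
    if Cfg.val x.2 k = 0 then [x] else [(x.1 + 1, (k, Cfg.val x.2 k - 1) :: x.2)]
  else if t = 3 then
    if Cfg.val x.2 k.unpair.1 = 0 then [(x.1 + 1, x.2)]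
    else [(k.unpair.2.unpair.1, x.2), (k.unpair.2.unpair.2, x.2)]
  else [x]

/-- All configurations that are `N` steps below one of the configurations in `l`. -/
def Cfg.level (L : List ℕ) (l : List Cfg) (N : ℕ) : List Cfg :=
  (fun l => l.flatMap (Cfg.next L))^[N] l

theorem Cfg.level_succ (L : List ℕ) (l : List Cfg) (N : ℕ) :
    Cfg.level L l (N + 1) = (Cfg.level L l N).flatMap (Cfg.next L) :=
  Function.iterate_succ_apply' _ _ _

theorem Cfg.level_eq_nil (L : List ℕ) (N : ℕ) (l : List Cfg) :
    Cfg.level L l N = [] ↔ ∀ x ∈ l, Cfg.level L [x] N = [] := by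
  have aux : ∀ l, Cfg.level L l N = l.flatMap fun x => Cfg.level L [x] N := by
    induction N with
    | zero => intro l; simp [Cfg.level]
    | succ N ih =>
      intro l
      rw [Cfg.level_succ, ih, List.flatMap_assoc]
      simp only [Cfg.level_succ]
  rw [aux, List.flatMap_eq_nil_iff]

theorem Cfg.level_nil_mono {L : List ℕ} {l : List Cfg} {N N' : ℕ} (hN : N ≤ N')
    (h : Cfg.level L l N = []) : Cfg.level L l N' = [] := by
  induction N', hN using Nat.le_induction with
  | base => exact h
  | succ n _ ih => rw [Cfg.level_succ, ih]; rfl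

/-- König's lemma: if the tree below `x` has infinite height, then so has the tree below
some successor of `x`. -/
theorem Cfg.exists_alive {L : List ℕ} {x : Cfg} (h : ∀ N, Cfg.level L [x] N ≠ []) :
    ∃ y ∈ Cfg.next L x, ∀ N, Cfg.level L [y] N ≠ [] := by
  by_contra! hcon
  have aux : ∀ l : List Cfg, (∀ y ∈ l, ∃ N, Cfg.level L [y] N = []) →
      ∃ N, ∀ y ∈ l, Cfg.level L [y] N = [] := by
    intro l hl
    induction l with
    | nil => simp
    | cons y l ih =>
      obtain ⟨N₁, h₁⟩ := hl y (by simp)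
      obtain ⟨N₂, h₂⟩ := ih fun z hz => hl z (by simp [hz])
      refine ⟨max N₁ N₂, fun z hz => ?_⟩
      rcases List.mem_cons.1 hz with rfl | hz
      · exact Cfg.level_nil_mono (le_max_left _ _) h₁
      · exact Cfg.level_nil_mono (le_max_right _ _) (h₂ z hz)
  obtain ⟨N, hN⟩ := aux _ hcon
  refine h (N + 1) ?_
  have : Cfg.level L [x] (N + 1) = Cfg.level L (Cfg.next L x) N := by
    simp [Cfg.level]
  rw [this, Cfg.level_eq_nil]
  exact hN

/-- One step of a non-halting computation in the sense of `IsComp`. -/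
def LiveStep (M : CM) (c d : Config) : Prop :=
  M.prog[c.loc]? ≠ some Instr.halt ∧ (Step M c d ∨ ((¬ ∃ e, Step M c e) ∧ d = c))

theorem Cfg.liveStep_iff (M : CM) (x : Cfg) (d : Config) :
    LiveStep M x.toConfig d ↔ ∃ y ∈ Cfg.next (M.prog.map Instr.code) x, y.toConfig = d := by
  obtain ⟨l, h⟩ := x
  rcases hi : M.prog[l]? with _ | i
  · simp [LiveStep, Step, Cfg.next, Cfg.toConfig, hi, List.getD_eq_getElem?_getD, eq_comm]
  cases i with
  | halt =>
    simp [LiveStep, Cfg.next, Cfg.toConfig, hi, List.getD_eq_getElem?_getD, Instr.code]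
  | inc k =>
    simp [LiveStep, Step, Cfg.next, Cfg.toConfig, hi, List.getD_eq_getElem?_getD, Instr.code,
      Cfg.val_cons, eq_comm]
  | dec k =>
    by_cases hk : Cfg.val h k = 0 <;>
    simp [LiveStep, Step, Cfg.next, Cfg.toConfig, hi, List.getD_eq_getElem?_getD, Instr.code,
      Cfg.val_cons, hk, eq_comm, Nat.pos_iff_ne_zero]
  | branch k i j =>
    by_cases hk : Cfg.val h k = 0 <;>
    simp [LiveStep, Step, Cfg.next, Cfg.toConfig, hi, List.getD_eq_getElem?_getD, Instr.code,
      hk, eq_comm]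

theorem hasNonHaltingComp_iff (M : CM) : HasNonHaltingComp M ↔
    ∀ N, Cfg.level (M.prog.map Instr.code) [(0, [])] N ≠ [] := by
  have hstart : Cfg.toConfig (0, []) = initConfig := by
    simp only [Cfg.toConfig, initConfig, Config.mk.injEq, true_and]
    funext k
    simp [Cfg.val]
  constructor
  · rintro ⟨ρ, ⟨h₀, hρ⟩, hhalt⟩ N
    have key : ∀ N, ∃ x ∈ Cfg.level (M.prog.map Instr.code) [(0, [])] N, x.toConfig = ρ N := by
      intro N
      induction N with
      | zero => exact ⟨(0, []), by simp [Cfg.level], by rw [hstart, h₀]⟩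
      | succ N ih =>
        obtain ⟨x, hx, hxρ⟩ := ih
        obtain ⟨y, hy, hyρ⟩ := (Cfg.liveStep_iff M x (ρ (N + 1))).1 (by
          rw [hxρ]; exact ⟨hhalt N, hρ N⟩)
        exact ⟨y, by rw [Cfg.level_succ]; exact List.mem_flatMap.2 ⟨x, hx, hy⟩, hyρ⟩
    obtain ⟨x, hx, _⟩ := key N
    exact List.ne_nil_of_mem hx
  · intro h
    let A := {x : Cfg // ∀ N, Cfg.level (M.prog.map Instr.code) [x] N ≠ []}
    have hstep : ∀ x : A, ∃ y : A, y.1 ∈ Cfg.next (M.prog.map Instr.code) x.1 := fun x => by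
      obtain ⟨y, hy, hy'⟩ := Cfg.exists_alive x.2
      exact ⟨⟨y, hy'⟩, hy⟩
    choose s hs using hstep
    let r : ℕ → A := fun N => s^[N] ⟨(0, []), h⟩
    have hr : ∀ N, LiveStep M (r N).1.toConfig (r (N + 1)).1.toConfig := fun N =>
      (Cfg.liveStep_iff M _ _).2 ⟨_, by
        simp only [r, Function.iterate_succ_apply']; exact hs _, rfl⟩
    exact ⟨fun N => (r N).1.toConfig, ⟨hstart, fun N => (hr N).2⟩, fun N => (hr N).1⟩

/-! ### Recognising codes of well-formed machines -/

/-- `a` is the code of an instruction that mentions only counters below `K`. -/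
def ValidInstr (a K : ℕ) : Prop :=
  a = 0 ∨ ((a.unpair.1 = 1 ∨ a.unpair.1 = 2) ∧ a.unpair.2 < K) ∨
    (a.unpair.1 = 3 ∧ a.unpair.2.unpair.1 < K)

/-- `L` is the list of instruction codes of a well-formed machine with `K` counters. -/
def ValidProg (L : List ℕ) (K : ℕ) : Prop :=
  (∀ a ∈ L, ValidInstr a K) ∧ (L.filter (· = 0)).length = 1

theorem validInstr_code (i : Instr) (K : ℕ) :
    ValidInstr i.code K ↔ ∀ k ∈ i.counters, k < K := by
  cases i with
  | halt => exact ⟨fun _ => by simp [Instr.counters], fun _ => .inl rfl⟩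
  | inc k =>
    simpa [ValidInstr, Instr.counters, Instr.code] using
      fun h => absurd (congrArg (fun a => a.unpair.1) h) (by simp)
  | dec k =>
    simpa [ValidInstr, Instr.counters, Instr.code] using
      fun h => absurd (congrArg (fun a => a.unpair.1) h) (by simp)
  | branch k i j =>
    simpa [ValidInstr, Instr.counters, Instr.code] using
      fun h => absurd (congrArg (fun a => a.unpair.1) h) (by simp)

theorem ValidInstr.exists_code {a K : ℕ} (h : ValidInstr a K) : ∃ i : Instr, i.code = a := by
  rcases h with rfl | ⟨h | h, -⟩ | ⟨h, -⟩
  · exact ⟨.halt, rfl⟩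
  · exact ⟨.inc a.unpair.2, by rw [Instr.code, ← h, Nat.pair_unpair]⟩
  · exact ⟨.dec a.unpair.2, by rw [Instr.code, ← h, Nat.pair_unpair]⟩
  · exact ⟨.branch a.unpair.2.unpair.1 a.unpair.2.unpair.2.unpair.1
      a.unpair.2.unpair.2.unpair.2, by
        rw [Instr.code, Nat.pair_unpair, Nat.pair_unpair, ← h, Nat.pair_unpair]⟩

theorem Instr.code_eq_zero (i : Instr) : i.code = 0 ↔ i = .halt := by
  cases i with
  | halt => exact ⟨fun _ => rfl, fun _ => rfl⟩
  | _ => simpa [Instr.code] using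
      fun h => absurd (congrArg (fun a => a.unpair.1) h) (by simp)

theorem validProg_code (M : CM) :
    ValidProg (M.prog.map Instr.code) M.numCounters ↔ M.WellFormed := by
  unfold ValidProg CM.WellFormed
  refine and_congr (by simp [validInstr_code]) ?_
  rw [List.filter_map, List.length_map, List.count, List.countP_eq_length_filter]
  have : ((fun a : ℕ => decide (a = 0)) ∘ Instr.code) = fun i => i == Instr.halt := by
    funext i
    rw [Function.comp_apply, Bool.eq_iff_iff]
    simp [Instr.code_eq_zero]
  rw [this]

/-- The list of instruction codes in the machine code `n`. -/
def progOf (n : ℕ) : List ℕ := Denumerable.ofNat (List ℕ) n.unpair.2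

theorem progOf_code (M : CM) : progOf M.code = M.prog.map Instr.code := by
  simp [progOf, CM.code, listCode_eq_encode]

theorem mem_nonHalting_iff (n : ℕ) :
    (∃ M : CM, n = M.code ∧ M.WellFormed ∧ HasNonHaltingComp M) ↔
      ValidProg (progOf n) n.unpair.1 ∧ ∀ N, Cfg.level (progOf n) [(0, [])] N ≠ [] := by
  constructor
  · rintro ⟨M, rfl, hM, h⟩
    rw [progOf_code, ← hasNonHaltingComp_iff]
    have := (validProg_code M).2 hM
    exact ⟨by simpa [CM.code] using this, h⟩
  · rintro ⟨hv, h⟩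
    have hr : progOf n ∈ Set.range (List.map Instr.code) := by
      rw [Set.range_list_map]
      exact fun a ha => (hv.1 a ha).exists_code
    obtain ⟨P, hP⟩ := hr
    rw [← hP] at hv h
    refine ⟨⟨n.unpair.1, P⟩, ?_, (validProg_code ⟨_, P⟩).1 hv,
      (hasNonHaltingComp_iff ⟨_, P⟩).2 h⟩
    simp only [CM.code, hP, listCode_eq_encode, progOf, Denumerable.encode_ofNat,
      Nat.pair_unpair]

theorem primrec_val : Primrec₂ Cfg.val :=
  Primrec.option_getD.comp (Primrec.listLookup.comp .snd .fst) (.const 0)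

theorem primrec_next : Primrec₂ Cfg.next := by
  have hx : Primrec fun q : List ℕ × Cfg => q.2 := .snd
  have hl : Primrec fun q : List ℕ × Cfg => q.2.1 := Primrec.fst.comp .snd
  have hh : Primrec fun q : List ℕ × Cfg => q.2.2 := Primrec.snd.comp .snd
  have ha : Primrec fun q : List ℕ × Cfg => (q.1.getD q.2.1 (Nat.pair 4 0)).unpair :=
    Primrec.unpair.comp ((Primrec.list_getD _).comp .fst hl)
  have ht := Primrec.fst.comp ha
  have hk := Primrec.snd.comp ha
  have hkk := Primrec.unpair.comp hk
  have hij := Primrec.unpair.comp (Primrec.snd.comp hkk)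
  have hv := primrec_val.comp hh hk
  have single : ∀ {f : List ℕ × Cfg → Cfg}, Primrec f → Primrec fun q => [f q] :=
    fun hf => Primrec.list_cons.comp hf (.const [])
  have hsucc := Primrec.succ.comp hl
  refine Primrec.ite (Primrec.eq.comp ht (.const 0)) (.const []) ?_
  refine Primrec.ite (Primrec.eq.comp ht (.const 1))
    (single (hsucc.pair (Primrec.list_cons.comp (hk.pair (Primrec.succ.comp hv)) hh))) ?_
  refine Primrec.ite (Primrec.eq.comp ht (.const 2))
    (Primrec.ite (Primrec.eq.comp hv (.const 0)) (single hx)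
      (single (hsucc.pair (Primrec.list_cons.comp (hk.pair (Primrec.pred.comp hv)) hh)))) ?_
  exact Primrec.ite (Primrec.eq.comp ht (.const 3))
    (Primrec.ite (Primrec.eq.comp (primrec_val.comp hh (Primrec.fst.comp hkk)) (.const 0))
      (single (hsucc.pair hh))
      (Primrec.list_cons.comp ((Primrec.fst.comp hij).pair hh)
        (single ((Primrec.snd.comp hij).pair hh)))) (single hx)

theorem primrec_validProg : PrimrecRel ValidProg := by
  have h₁ : PrimrecRel ValidInstr := by
    have ha : Primrec fun q : ℕ × ℕ => q.1 := .fst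
    have hu := Primrec.unpair.comp ha
    have ht := Primrec.fst.comp hu
    have hk := Primrec.snd.comp hu
    have hK : Primrec fun q : ℕ × ℕ => q.2 := .snd
    exact (Primrec.eq.comp ha (.const 0)).or
      ((((Primrec.eq.comp ht (.const 1)).or (Primrec.eq.comp ht (.const 2))).and
        (Primrec.nat_lt.comp hk hK)).or ((Primrec.eq.comp ht (.const 3)).and
          (Primrec.nat_lt.comp (Primrec.fst.comp (Primrec.unpair.comp hk)) hK)))
  exact h₁.forall_mem_list.and (Primrec.eq.comp (Primrec.list_length.comp
    ((Primrec.listFilter (Primrec.eq.comp .id (.const 0))).comp .fst)) (.const 1))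

theorem primrec_progOf : Primrec progOf :=
  (Primrec.ofNat (List ℕ)).comp (Primrec.snd.comp .unpair)

open Classical in
/-- `searchTest n N` is nonzero iff `n` is the code of a well-formed machine with a computation
that avoids `halt` for `N` steps. -/
noncomputable def searchTest (n N : ℕ) : ℕ :=
  if ValidProg (progOf n) n.unpair.1 then (Cfg.level (progOf n) [(0, [])] N).length else 0

theorem primrec_searchTest : Primrec₂ searchTest := by
  classical
  refine Primrec.ite (primrec_validProg.comp (primrec_progOf.comp .fst)
    (Primrec.fst.comp (Primrec.unpair.comp .fst))) (Primrec.list_length.comp ?_) (.const 0)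
  have hlevel : Primrec₂ fun (q : ℕ × ℕ) (l : List Cfg) =>
      l.flatMap (Cfg.next (progOf q.1)) := by
    refine Primrec.list_flatMap (f := fun a : (ℕ × ℕ) × List Cfg => a.2)
      (g := fun a x => Cfg.next (progOf a.1.1) x) .snd ?_
    exact primrec_next.comp
      (primrec_progOf.comp (Primrec.fst.comp (Primrec.fst.comp .fst))) .snd
  exact Primrec.nat_iterate .snd (.const [(0, [])]) hlevel

theorem searchTest_spec (n : ℕ) :
    ((∃ M : CM, n = M.code ∧ M.WellFormed ∧ HasNonHaltingComp M) ∧ ∀ N, searchTest n N ≠ 0) ∨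
    ((¬ ∃ M : CM, n = M.code ∧ M.WellFormed ∧ HasNonHaltingComp M) ∧
      ∃ N₀, ∀ N ≥ N₀, searchTest n N = 0) := by
  rw [mem_nonHalting_iff]
  by_cases hv : ValidProg (progOf n) n.unpair.1
  · by_cases h : ∀ N, Cfg.level (progOf n) [(0, [])] N ≠ []
    · exact .inl ⟨⟨hv, h⟩, fun N => by simpa [searchTest, hv] using h N⟩
    · refine .inr ⟨fun h' => h h'.2, ?_⟩
      push Not at h
      obtain ⟨N₀, h₀⟩ := h
      exact ⟨N₀, fun N hN => by simpa [searchTest, hv] using Cfg.level_nil_mono hN h₀⟩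
  · exact .inr ⟨fun h => hv h.1, 0, fun N _ => by simp [searchTest, hv]⟩

theorem CM.code_injective {M M' : CM} (h : M.code = M'.code) : M = M' := by
  obtain ⟨K, P⟩ := M
  obtain ⟨K', P'⟩ := M'
  simp only [CM.code, listCode_eq_encode, Nat.pair_eq_pair, Encodable.encode_inj] at h
  have hi : Function.Injective Instr.code := by
    intro i j hij
    cases i <;> cases j <;>
      simp_all [Instr.code, Nat.pair_eq_pair]
  rw [h.1, hi.list_map h.2]

/-- **Hardness reduction for the finite counter problem.** There is a total
computable map `M ↦ M′` (with a fresh counter `v₀`) such that `M` has a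
non-halting computation iff `v₀` is bounded over all computations of `M′`.
Consequently the non-halting problem many-one reduces to the finite counter
problem. -/
theorem stmt11 :
    (∃ F : CM → CM,
      (∃ f : ℕ → ℕ, Computable f ∧ ∀ M : CM, f M.code = (F M).code) ∧
      ∀ M : CM, M.WellFormed →
        (HasNonHaltingComp M ↔ ∃ β : ℕ, ∀ c, Reaches (F M) c → c.cnt 0 ≤ β)) ∧
    ManyOneRed {n | ∃ M : CM, n = M.code ∧ M.WellFormed ∧ HasNonHaltingComp M}
      {n | ∃ M : CM, n = M.code ∧ M.WellFormed ∧
        ∃ β : ℕ, ∀ c, Reaches M c → c.cnt 0 ≤ β} := by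
  obtain ⟨G, hG, hspec⟩ := exists_machines searchTest primrec_searchTest
  have key : ∀ n, (∃ M : CM, n = M.code ∧ M.WellFormed ∧ HasNonHaltingComp M) ↔
      ∃ β : ℕ, ∀ c, Reaches (G n) c → c.cnt 0 ≤ β := by
    intro n
    obtain ⟨_, hb, hu⟩ := hspec n
    rcases searchTest_spec n with ⟨h, hs⟩ | ⟨h, hs⟩
    · exact ⟨fun _ => ⟨0, hb hs⟩, fun _ => h⟩
    · refine ⟨fun h' => absurd h' h, fun ⟨β, hβ⟩ => ?_⟩
      obtain ⟨c, hc, hlt⟩ := hu hs β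
      exact absurd (hβ c hc) (by omega)
  refine ⟨⟨fun M => G M.code, ⟨_, hG, fun _ => rfl⟩, fun M hM => ?_⟩, _, hG, fun n => ?_⟩
  · rw [← key]
    refine ⟨fun h => ⟨M, rfl, hM, h⟩, ?_⟩
    rintro ⟨M', hc, _, h⟩
    rwa [CM.code_injective hc]
  · rw [Set.mem_ofPred_eq, key]
    refine ⟨fun h => ⟨G n, rfl, (hspec n).1, h⟩, ?_⟩
    rintro ⟨M', hc, _, h⟩
    rwa [CM.code_injective hc]
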